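/- Let Q_1 ⊆ ℝ^{k_1} and Q_2 ⊆ ℝ^{k_2} be polytopes, and let S be a subdivision of the product polytope Q = Q_1 × Q_2 ⊆ ℝ^{k_1+k_2} such that every edge (1-dimensional face) of S is also an edge of Q_1 × Q_2. Then S = S_1 × S_2 for some subdivision S_1 of Q_1 and some subdivision S_2 of Q_2; that is, the cells of S are exactly the products P_1 × P_2 with P_1 a cell of S_1 and P_2 a cell of S_2. -/

import Mathlib

section GenericPolytopes

variable {V : Type*} [AddCommGroup V] [Module ℝ V]

/-- A polytope in a real vector space `V`: the convex hull of a finite set of points. -/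
def IsPolytope (P : Set V) : Prop := ∃ t : Finset V, P = convexHull ℝ ↑t

/-- The face of a set `Q ⊆ V` maximizing the linear functional `φ`. -/
def faceL (φ : V →ₗ[ℝ] ℝ) (Q : Set V) : Set V := {x ∈ Q | ∀ y ∈ Q, φ y ≤ φ x}

/-- `F` is a face of `Q` if it is the maximizing set of some linear functional on `Q`.
(Taking `φ = 0` shows `Q` is a face of itself.) -/
def IsFaceOf (Q F : Set V) : Prop := ∃ φ : V →ₗ[ℝ] ℝ, F = faceL φ Q

/-- The dimension of a subset of `V`: the dimension of its affine hull. -/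
noncomputable def pdim (P : Set V) : ℕ := Module.finrank ℝ (vectorSpan ℝ P)

/-- `S` is a subdivision of the polytope `Q`: a finite collection of polytopes of the same
dimension as `Q` whose vertices are vertices of `Q`, whose union is `Q`, and in which any
two distinct cells meet (if at all) in a proper face of both. -/
structure IsSubdivision (S : Finset (Set V)) (Q : Set V) : Prop where
  poly : ∀ P ∈ S, IsPolytope P
  dim_eq : ∀ P ∈ S, pdim P = pdim Q
  vertices_subset : ∀ P ∈ S, Set.extremePoints ℝ P ⊆ Set.extremePoints ℝ Q
  cover : ⋃₀ ↑S = Q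
  inter_face : ∀ P ∈ S, ∀ P' ∈ S, P ≠ P' → (P ∩ P').Nonempty →
    IsFaceOf P (P ∩ P') ∧ P ∩ P' ≠ P ∧ IsFaceOf P' (P ∩ P') ∧ P ∩ P' ≠ P'

/-- A face of a subdivision `S` is a face of one of its cells. -/
def IsFaceOfSubdivision (S : Finset (Set V)) (F : Set V) : Prop := ∃ P ∈ S, IsFaceOf P F

/-- An edge of a subdivision: a one-dimensional face of one of its cells. -/
def IsEdgeOfSubdivision (S : Finset (Set V)) (F : Set V) : Prop :=
  IsFaceOfSubdivision S F ∧ pdim F = 1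

end GenericPolytopes

section Aux

set_option linter.unusedSectionVars false
set_option linter.unusedVariables false

variable {E F : Type*} [NormedAddCommGroup E] [NormedSpace ℝ E] [FiniteDimensional ℝ E]
  [NormedAddCommGroup F] [NormedSpace ℝ F] [FiniteDimensional ℝ F]

theorem aux_compact {P : Set E} (h : IsPolytope P) : IsCompact P := by
  obtain ⟨t, rfl⟩ := h
  exact t.finite_toSet.isCompact_convexHull (𝕜 := ℝ)

theorem aux_convex {P : Set E} (h : IsPolytope P) : Convex ℝ P := by
  obtain ⟨t, rfl⟩ := h
  exact convex_convexHull ℝ _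

theorem aux_image {P : Set E} (h : IsPolytope P) (f : E →ₗ[ℝ] F) : IsPolytope (f '' P) := by
  classical
  obtain ⟨t, rfl⟩ := h
  refine ⟨t.image f, ?_⟩
  rw [LinearMap.image_convexHull, Finset.coe_image]

/-- Edge cone lemma. -/
theorem aux_edges {P : Set E} (hP : IsPolytope P) {v : E} (hv : v ∈ P.extremePoints ℝ) :
    ∃ U : Set E, (∀ x ∈ P, x - v ∈ PointedCone.hull ℝ U) ∧
      ∀ u ∈ U, u ≠ 0 ∧ v + u ∈ P ∧ ∃ g : E →ₗ[ℝ] ℝ, v ∈ faceL g P ∧ v + u ∈ faceL g P ∧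
        ∀ x ∈ faceL g P, x - v ∈ Submodule.span ℝ {u} := by
  classical
  obtain ⟨t, rfl⟩ := hP
  set T : Finset E := (t.image (fun w => w - v)).erase 0 with hT
  have hTt : ∀ u ∈ T, u ≠ 0 ∧ v + u ∈ t := by
    intro u hu
    simp only [hT, Finset.mem_erase, Finset.mem_image] at hu
    obtain ⟨h0, w, hw, rfl⟩ := hu
    exact ⟨h0, by simpa using hw⟩
  -- h negative on T
  have hvt : v ∉ convexHull ℝ ((t : Set E) \ {v}) := by
    intro hmem
    have h1 := ((convex_convexHull ℝ (t : Set E)).mem_extremePoints_iff_mem_sdiff_convexHull_sdiff).1 hv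
    exact h1.2 (convexHull_mono (Set.sdiff_subset_sdiff_left (subset_convexHull ℝ _)) hmem)
  obtain ⟨h, a, hha, hav⟩ := geometric_hahn_banach_closed_point (convex_convexHull ℝ _)
    ((t.finite_toSet.subset Set.sdiff_subset).isCompact_convexHull (𝕜 := ℝ)).isClosed hvt
  have hneg : ∀ u ∈ T, h u < 0 := by
    intro u hu
    obtain ⟨h0, hm⟩ := hTt u hu
    have := hha (v + u) (subset_convexHull ℝ _ ⟨hm, by simpa using h0⟩)
    rw [map_add] at this
    linarith
  -- minimal
  obtain ⟨U, hUT, hUmin⟩ := exists_minimal_le_of_wellFoundedLT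
    (fun U : Finset E => (U ⊆ T) ∧ (T : Set E) ⊆ PointedCone.hull ℝ (U : Set E)) T
    ⟨subset_rfl, Submodule.subset_span⟩
  obtain ⟨⟨hUsub, hUspan⟩, hmin⟩ := hUmin
  have hcone : ∀ x ∈ convexHull ℝ (t : Set E), x - v ∈ PointedCone.hull ℝ (U : Set E) := by
    intro x hx
    have hconv : Convex ℝ {x : E | x - v ∈ PointedCone.hull ℝ (U : Set E)} := by
      intro x hx y hy a b ha hb hab
      have : a • x + b • y - v = a • (x - v) + b • (y - v) := by
        have : v = (a + b) • v := by rw [hab, one_smul]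
        nth_rewrite 1 [this]
        module
      simp only [Set.mem_ofPred_eq] at hx hy ⊢
      rw [this]
      exact add_mem (Submodule.smul_mem _ (⟨a, ha⟩ : {c : ℝ // 0 ≤ c}) hx)
        (Submodule.smul_mem _ (⟨b, hb⟩ : {c : ℝ // 0 ≤ c}) hy)
    refine convexHull_min ?_ hconv hx
    intro w hw
    simp only [Set.mem_ofPred_eq]
    by_cases h0 : w - v = 0
    · rw [h0]; exact zero_mem _
    · apply hUspan
      simp only [hT, Finset.coe_erase, Finset.coe_image]
      exact ⟨⟨w, hw, rfl⟩, h0⟩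
  refine ⟨U, hcone, ?_⟩
  intro u hu
  obtain ⟨hu0, hut⟩ := hTt u (hUsub hu)
  have hvuP : v + u ∈ convexHull ℝ (t : Set E) := subset_convexHull ℝ _ hut
  refine ⟨hu0, hvuP, ?_⟩
  set W : Finset E := U.erase u with hW
  have hWU : W ⊆ U := Finset.erase_subset _ _
  have hunot : u ∉ PointedCone.hull ℝ (W : Set E) := by
    intro hmem
    have hle : PointedCone.hull ℝ (U : Set E) ≤ PointedCone.hull ℝ (W : Set E) := by
      refine Submodule.span_le.2 ?_
      intro z hz
      by_cases hzu : z = u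
      · rw [hzu]; exact hmem
      · exact Submodule.subset_span (by simp only [hW, Finset.coe_erase]; exact ⟨hz, hzu⟩)
    have := hmin (y := W) ⟨hWU.trans hUsub, fun z hz => hle (hUspan hz)⟩ hWU
    exact (Finset.notMem_erase u U) (this hu)
  have hWconv : convexHull ℝ (W : Set E) ⊆ PointedCone.hull ℝ (W : Set E) :=
    convexHull_min Submodule.subset_span (PointedCone.convex _)
  have hWneg : ∀ p ∈ convexHull ℝ (W : Set E), h p < 0 := by
    intro p hp
    have : convexHull ℝ (W : Set E) ⊆ {x | h x < 0} :=
      convexHull_min (fun z hz => hneg z (hUsub (hWU hz)))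
        (convex_halfSpace_lt h.toLinearMap.isLinear 0)
    exact this hp
  have hdisj : Disjoint (convexHull ℝ (W : Set E)) (Submodule.span ℝ {u} : Set E) := by
    rw [Set.disjoint_left]
    intro p hp hp2
    obtain ⟨s, rfl⟩ := Submodule.mem_span_singleton.1 hp2
    have h1 := hWneg _ hp
    have h2 := hneg u (hUsub hu)
    rw [map_smul, smul_eq_mul] at h1
    have hs : 0 < s := by
      by_contra hs
      push Not at hs
      nlinarith
    apply hunot
    have := Submodule.smul_mem _ (⟨s⁻¹, by positivity⟩ : {c : ℝ // 0 ≤ c}) (hWconv hp)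
    have e : (⟨s⁻¹, by positivity⟩ : {c : ℝ // 0 ≤ c}) • (s • u) = u := by
      change s⁻¹ • (s • u) = u
      rw [smul_smul, inv_mul_cancel₀ hs.ne', one_smul]
    rwa [e] at this
  obtain ⟨f, α, β, hf1, hαβ, hf2⟩ := geometric_hahn_banach_compact_closed
    (convex_convexHull ℝ _) (W.finite_toSet.isCompact_convexHull (𝕜 := ℝ))
    (Submodule.convex (Submodule.span ℝ {u}))
    (Submodule.closed_of_finiteDimensional _) hdisj
  have hβ : β < 0 := by simpa using hf2 0 (zero_mem _)
  have hfu : f u = 0 := by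
    by_contra hne
    have := hf2 ((β / f u) • u) (Submodule.smul_mem _ _ (Submodule.mem_span_singleton_self u))
    rw [map_smul, smul_eq_mul, div_mul_cancel₀ _ hne] at this
    exact lt_irrefl _ this
  have hind : ∀ y ∈ PointedCone.hull ℝ (U : Set E),
      f y ≤ 0 ∧ (f y = 0 → y ∈ Submodule.span ℝ {u}) := by
    intro y hy
    induction hy using Submodule.span_induction with
    | mem y hy =>
      by_cases hyu : y = u
      · subst hyu
        exact ⟨hfu.le, fun _ => Submodule.mem_span_singleton_self _⟩
      · have := hf1 y (subset_convexHull ℝ _ (by simp only [hW, Finset.coe_erase]; exact ⟨hy, hyu⟩))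
        exact ⟨by linarith, fun h => by linarith⟩
    | zero => simp
    | add y z _ _ hy hz =>
      rw [map_add]
      refine ⟨by linarith [hy.1, hz.1], fun h => add_mem (hy.2 ?_) (hz.2 ?_)⟩
      · linarith [hy.1, hz.1]
      · linarith [hy.1, hz.1]
    | smul c y _ hy =>
      have e : c • y = (c : ℝ) • y := rfl
      have hc : 0 ≤ (c : ℝ) := c.2
      rw [e, map_smul, smul_eq_mul]
      refine ⟨by nlinarith [hy.1], fun h => ?_⟩
      rcases mul_eq_zero.1 h with h | h
      · rw [h, zero_smul]; exact zero_mem _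
      · exact Submodule.smul_mem _ _ (hy.2 h)
  have hle : ∀ x ∈ convexHull ℝ (t : Set E), f x ≤ f v := by
    intro x hx
    have := (hind _ (hcone x hx)).1
    rw [map_sub] at this
    linarith
  have hvP : v ∈ convexHull ℝ (t : Set E) := hv.1
  refine ⟨f.toLinearMap, ⟨hvP, hle⟩, ⟨hvuP, ?_⟩, ?_⟩
  · intro y hy
    change f y ≤ f (v + u)
    rw [map_add, hfu, add_zero]
    exact hle y hy
  · intro x hx
    refine (hind _ (hcone x hx.1)).2 ?_
    have h1 : f v ≤ f x := hx.2 v hvP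
    have h2 := hle x hx.1
    rw [map_sub]; linarith

theorem aux_exists_vertex {P : Set E} (hP : IsPolytope P) (hne : P.Nonempty) (f : E →L[ℝ] ℝ) :
    ∃ v ∈ P.extremePoints ℝ, ∀ x ∈ P, f x ≤ f v := by
  have hexp : IsExposed ℝ P {x ∈ P | ∀ y ∈ P, f y ≤ f x} := fun _ => ⟨f, rfl⟩
  have hc : IsCompact {x ∈ P | ∀ y ∈ P, f y ≤ f x} := hexp.isCompact (aux_compact hP)
  obtain ⟨x, hx, hmax⟩ := (aux_compact hP).exists_isMaxOn hne f.continuous.continuousOn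
  obtain ⟨v, hv⟩ := hc.extremePoints_nonempty ⟨x, hx, fun y hy => hmax hy⟩
  exact ⟨v, hexp.isExtreme.extremePoints_subset_extremePoints hv, hv.1.2⟩

theorem aux_faceL_prod {A : Set E} {B : Set F} (φ : E × F →ₗ[ℝ] ℝ)
    (hA : A.Nonempty) (hB : B.Nonempty) :
    faceL φ (A ×ˢ B) = faceL (φ ∘ₗ LinearMap.inl ℝ E F) A ×ˢ faceL (φ ∘ₗ LinearMap.inr ℝ E F) B := by
  have key : ∀ a b, φ (a, b) = φ (a, 0) + φ (0, b) := by
    intro a b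
    rw [← map_add]; simp
  ext ⟨a, b⟩
  simp only [faceL, Set.mem_prod, Set.mem_ofPred_eq, LinearMap.comp_apply, LinearMap.inl_apply,
    LinearMap.inr_apply]
  constructor
  · rintro ⟨⟨ha, hb⟩, h⟩
    refine ⟨⟨ha, fun y hy => ?_⟩, hb, fun y hy => ?_⟩
    · have := h (y, b) ⟨hy, hb⟩
      rw [key y b, key a b] at this
      linarith
    · have := h (a, y) ⟨ha, hy⟩
      rw [key a y, key a b] at this
      linarith
  · rintro ⟨⟨ha, h1⟩, hb, h2⟩
    refine ⟨⟨ha, hb⟩, ?_⟩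
    rintro ⟨y, z⟩ ⟨hy, hz⟩
    rw [key y z, key a b]
    exact add_le_add (h1 y hy) (h2 z hz)

theorem aux_face_of_prod {A A' : Set E} {B B' : Set F} (hA' : A'.Nonempty) (hB' : B'.Nonempty)
    (hA : A.Nonempty) (hB : B.Nonempty) (h : IsFaceOf (A ×ˢ B) (A' ×ˢ B')) :
    IsFaceOf A A' ∧ IsFaceOf B B' := by
  obtain ⟨φ, h⟩ := h
  rw [aux_faceL_prod φ hA hB] at h
  rcases Set.prod_eq_prod_iff.1 h with h | h
  · exact ⟨⟨_, h.1⟩, ⟨_, h.2⟩⟩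
  · rcases h.1 with h | h
    · exact absurd h hA'.ne_empty
    · exact absurd h hB'.ne_empty

/-- All cells are products. -/
theorem aux_cell_prod {Q₁ : Set E} {Q₂ : Set F} {P : Set (E × F)} (hP : IsPolytope P)
    (hPQ : P ⊆ Q₁ ×ˢ Q₂)
    (hedges : ∀ G, IsFaceOf P G → pdim G = 1 → IsFaceOf (Q₁ ×ˢ Q₂) G) :
    P = (Prod.fst '' P) ×ˢ (Prod.snd '' P) := by
  apply Set.Subset.antisymm
  · intro p hp
    exact ⟨⟨p, hp, rfl⟩, ⟨p, hp, rfl⟩⟩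
  rintro ⟨a, b⟩ ⟨⟨p, hp, hpa⟩, ⟨q, hq, hqb⟩⟩
  simp only at hpa hqb
  by_contra hab
  obtain ⟨f, α, h1, h2⟩ := geometric_hahn_banach_closed_point (aux_convex hP)
    (aux_compact hP).isClosed hab
  obtain ⟨v, hv, hvmax⟩ := aux_exists_vertex hP ⟨p, hp⟩ f
  obtain ⟨U, hU, hU2⟩ := aux_edges hP hv
  have hdir : ∀ u ∈ U, u.1 = 0 ∨ u.2 = 0 := by
    intro u hu
    obtain ⟨hu0, huP, g, hg1, hg2, hg3⟩ := hU2 u hu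
    have hvs : vectorSpan ℝ (faceL g P) = Submodule.span ℝ {u} := by
      apply le_antisymm
      · rw [vectorSpan_eq_span_vsub_set_right ℝ hg1, Submodule.span_le]
        rintro _ ⟨x, hx, rfl⟩
        exact hg3 x hx
      · rw [Submodule.span_singleton_le_iff_mem]
        have := vsub_mem_vectorSpan ℝ hg2 hg1
        simpa using this
    have hd : pdim (faceL g P) = 1 := by
      rw [pdim, hvs, finrank_span_singleton hu0]
    obtain ⟨φ, hφ⟩ := hedges _ ⟨g, rfl⟩ hd
    have hvQ := hPQ hv.1
    rw [aux_faceL_prod φ ⟨_, hvQ.1⟩ ⟨_, hvQ.2⟩] at hφ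
    have hm : ((v.1, (v + u).2) : E × F) ∈ faceL g P := by
      rw [hφ] at hg1 hg2 ⊢
      exact ⟨hg1.1, hg2.2⟩
    obtain ⟨s, hs⟩ := Submodule.mem_span_singleton.1 (hg3 _ hm)
    have e1 : s • u.1 = 0 := by simpa using congrArg Prod.fst hs
    have e2 : s • u.2 = u.2 := by simpa using congrArg Prod.snd hs
    rcases smul_eq_zero.1 e1 with h | h
    · right; rw [← e2, h, zero_smul]
    · exact Or.inl h
  have hfu : ∀ u ∈ U, f u ≤ 0 := by
    intro u hu
    have := hvmax _ (hU2 u hu).2.1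
    rw [map_add] at this
    linarith
  have hcone : ∀ y ∈ PointedCone.hull ℝ U, f (y.1, 0) ≤ 0 ∧ f (0, y.2) ≤ 0 := by
    intro y hy
    induction hy using Submodule.span_induction with
    | mem y hy =>
      have h0 := hfu y hy
      rcases hdir y hy with h | h
      · have e : ((0 : E), y.2) = y := Prod.ext h.symm rfl
        have e' : ((y.1, 0) : E × F) = 0 := by rw [h]; rfl
        rw [e, e']; simpa using h0
      · have e : (y.1, (0 : F)) = y := Prod.ext rfl h.symm
        have e' : ((0, y.2) : E × F) = 0 := by rw [h]; rfl
        rw [e, e']; simpa using h0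
    | zero =>
      have : f ((0 : E), (0 : F)) = 0 := map_zero f
      simp [this]
    | add y z _ _ hy hz =>
      have e1 : (((y + z).1, 0) : E × F) = (y.1, 0) + (z.1, 0) := by simp
      have e2 : ((0, (y + z).2) : E × F) = (0, y.2) + (0, z.2) := by simp
      rw [e1, e2, map_add, map_add]
      exact ⟨by linarith [hy.1, hz.1], by linarith [hy.2, hz.2]⟩
    | smul c y _ hy =>
      have e1 : (((c • y).1, 0) : E × F) = (c : ℝ) • (y.1, (0 : F)) := by
        change (((c : ℝ) • y.1, (0 : F)) : E × F) = _
        simp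
      have e2 : ((0, (c • y).2) : E × F) = (c : ℝ) • ((0 : E), y.2) := by
        change (((0 : E), (c : ℝ) • y.2) : E × F) = _
        simp
      have hc : 0 ≤ (c : ℝ) := c.2
      rw [e1, e2, map_smul, map_smul, smul_eq_mul, smul_eq_mul]
      exact ⟨by nlinarith [hy.1], by nlinarith [hy.2]⟩
  have k1 := (hcone _ (hU p hp)).1
  have k2 := (hcone _ (hU q hq)).2
  have e : ((a, b) : E × F) = v + (((p - v).1, 0) + (0, (q - v).2)) := by
    subst hpa hqb
    ext <;> simp
  rw [e, map_add, map_add] at h2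
  linarith [h1 v hv.1]

/-- Existence of a relative interior point. -/
theorem aux_center {A : Set E} (hA : IsPolytope A) (hne : A.Nonempty) :
    ∃ x ∈ A, ∀ φ : E →ₗ[ℝ] ℝ, (∀ y ∈ A, φ y ≤ φ x) → ∀ y ∈ A, φ y = φ x := by
  classical
  obtain ⟨t, rfl⟩ := hA
  have htne : t.Nonempty := by
    simpa using hne
  have hcard : (0 : ℝ) < t.card := by exact_mod_cast htne.card_pos
  refine ⟨∑ w ∈ t, (t.card : ℝ)⁻¹ • w, ?_, ?_⟩
  · refine (convex_convexHull ℝ _).sum_mem (fun _ _ => by positivity) ?_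
      (fun w hw => subset_convexHull ℝ _ hw)
    simp [hcard.ne']
  · intro φ hφ
    set x := ∑ w ∈ t, (t.card : ℝ)⁻¹ • w with hx
    have hsum : ∑ w ∈ t, (φ x - φ w) = 0 := by
      have : φ x = (t.card : ℝ)⁻¹ * ∑ w ∈ t, φ w := by
        rw [hx, map_sum, Finset.mul_sum]
        simp
      rw [Finset.sum_sub_distrib, Finset.sum_const, nsmul_eq_mul, this]
      field_simp
      ring
    have hz := (Finset.sum_eq_zero_iff_of_nonneg (fun w hw => by
      linarith [hφ w (subset_convexHull ℝ _ hw)])).1 hsum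
    intro y hy
    apply le_antisymm (hφ y hy)
    have hsub : convexHull ℝ (t : Set E) ⊆ {y | φ x ≤ φ y} :=
      convexHull_min (fun w hw => by
        have := hz w hw
        simp only [Set.mem_ofPred_eq]; linarith) (convex_halfSpace_ge φ.isLinear _)
    exact hsub hy

/-- A face of full dimension is everything. -/
theorem aux_face_dim {A B : Set E} (hAB : IsFaceOf B A) (hne : A.Nonempty)
    (hd : pdim A = pdim B) : A = B := by
  obtain ⟨φ, rfl⟩ := hAB
  have hsub : faceL φ B ⊆ B := fun x hx => hx.1
  apply Set.Subset.antisymm hsub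
  have hv : vectorSpan ℝ (faceL φ B) = vectorSpan ℝ B :=
    Submodule.eq_of_le_of_finrank_eq (vectorSpan_mono ℝ hsub) hd
  obtain ⟨a, ha⟩ := hne
  have hker : vectorSpan ℝ (faceL φ B) ≤ LinearMap.ker φ := by
    rw [vectorSpan_eq_span_vsub_set_right ℝ ha, Submodule.span_le]
    rintro _ ⟨x, hx, rfl⟩
    have := hx.2 a ha.1
    have := ha.2 x hx.1
    simp only [SetLike.mem_coe, LinearMap.mem_ker, vsub_eq_sub, map_sub]
    linarith
  intro b hb
  have : b - a ∈ LinearMap.ker φ := hker (hv ▸ vsub_mem_vectorSpan ℝ hb ha.1)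
  rw [LinearMap.mem_ker, map_sub] at this
  exact ⟨hb, fun y hy => by linarith [ha.2 y hy]⟩

theorem aux_key {ι : Type*} (S : Finset ι) (A : ι → Set E) (B : ι → Set F)
    {Q₁ : Set E} {Q₂ : Set F} (hQ₂ : IsPreconnected Q₂)
    (hB : ∀ i ∈ S, IsCompact (B i)) (hBQ : ∀ i ∈ S, B i ⊆ Q₂) (hAQ : ∀ i ∈ S, A i ⊆ Q₁)
    (hcov : ∀ x ∈ Q₁, ∀ y ∈ Q₂, ∃ i ∈ S, x ∈ A i ∧ y ∈ B i)
    (hint : ∀ i ∈ S, ∀ j ∈ S, A i ≠ A j → (A i ∩ A j).Nonempty → (B i ∩ B j).Nonempty →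
      IsFaceOf (A i) (A i ∩ A j) ∧ IsFaceOf (A j) (A i ∩ A j))
    (hdim : ∀ i ∈ S, ∀ j ∈ S, pdim (A i) = pdim (A j))
    {i j : ι} (hi : i ∈ S) (hj : j ∈ S) {x : E} (hxi : x ∈ A i)
    (hx : ∀ φ : E →ₗ[ℝ] ℝ, (∀ y ∈ A i, φ y ≤ φ x) → ∀ y ∈ A i, φ y = φ x)
    (hxj : x ∈ A j) (hBi : (B i).Nonempty) (hBj : (B j).Nonempty) : A j = A i := by
  by_contra hne
  set I1 : Set ι := {k | k ∈ S ∧ A k = A i}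
  set I2 : Set ι := {k | k ∈ S ∧ x ∈ A k ∧ A k ≠ A i}
  have hf1 : I1.Finite := S.finite_toSet.subset fun k hk => hk.1
  have hf2 : I2.Finite := S.finite_toSet.subset fun k hk => hk.1
  have hc1 : IsClosed (⋃ k ∈ I1, B k) := hf1.isClosed_biUnion fun k hk => (hB k hk.1).isClosed
  have hc2 : IsClosed (⋃ k ∈ I2, B k) := hf2.isClosed_biUnion fun k hk => (hB k hk.1).isClosed
  obtain ⟨b, hb⟩ := hBi
  obtain ⟨c, hc⟩ := hBj
  obtain ⟨y, -, hy1, hy2⟩ := isPreconnected_closed_iff.1 hQ₂ _ _ hc1 hc2 (by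
    intro y hy
    obtain ⟨k, hk, hxk, hyk⟩ := hcov x (hAQ i hi hxi) y hy
    by_cases h : A k = A i
    · exact Or.inl (Set.mem_biUnion (show k ∈ I1 from ⟨hk, h⟩) hyk)
    · exact Or.inr (Set.mem_biUnion (show k ∈ I2 from ⟨hk, hxk, h⟩) hyk))
    ⟨b, hBQ i hi hb, Set.mem_biUnion (show i ∈ I1 from ⟨hi, rfl⟩) hb⟩
    ⟨c, hBQ j hj hc, Set.mem_biUnion (show j ∈ I2 from ⟨hj, hxj, hne⟩) hc⟩
  simp only [Set.mem_iUnion, exists_prop] at hy1 hy2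
  obtain ⟨k, ⟨hk, hki⟩, hyk⟩ := hy1
  obtain ⟨l, ⟨hl, hxl, hli⟩, hyl⟩ := hy2
  have hxk : x ∈ A k := hki ▸ hxi
  obtain ⟨⟨φ, h1⟩, h2⟩ := hint k hk l hl (by rw [hki]; exact fun h => hli h.symm)
    ⟨x, hxk, hxl⟩ ⟨y, hyk, hyl⟩
  have hxf : x ∈ faceL φ (A k) := h1 ▸ ⟨hxk, hxl⟩
  have hconst := hx φ (by rw [← hki]; exact hxf.2)
  have hfull : A k ∩ A l = A k := by
    rw [h1]
    apply Set.Subset.antisymm (fun z hz => hz.1)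
    intro z hz
    refine ⟨hz, fun w hw => ?_⟩
    rw [hki] at hz hw
    rw [hconst z hz, hconst w hw]
  rw [hfull] at h2
  exact hli ((aux_face_dim h2 ⟨x, hxk⟩ (hdim k hk l hl)).symm.trans hki)

theorem aux_vectorSpan_prod {A : Set E} {B : Set F} (hA : A.Nonempty) (hB : B.Nonempty) :
    vectorSpan ℝ (A ×ˢ B) = (vectorSpan ℝ A).prod (vectorSpan ℝ B) := by
  obtain ⟨a, ha⟩ := hA
  obtain ⟨b, hb⟩ := hB
  apply le_antisymm
  · rw [vectorSpan_eq_span_vsub_set_right ℝ (show (a, b) ∈ A ×ˢ B from ⟨ha, hb⟩),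
      Submodule.span_le]
    rintro _ ⟨x, hx, rfl⟩
    exact ⟨vsub_mem_vectorSpan ℝ hx.1 ha, vsub_mem_vectorSpan ℝ hx.2 hb⟩
  · have h1 : vectorSpan ℝ A ≤ (vectorSpan ℝ (A ×ˢ B)).comap (LinearMap.inl ℝ E F) := by
      rw [vectorSpan_eq_span_vsub_set_right ℝ ha, Submodule.span_le]
      rintro _ ⟨x, hx, rfl⟩
      have := vsub_mem_vectorSpan ℝ (show (x, b) ∈ A ×ˢ B from ⟨hx, hb⟩)
        (show (a, b) ∈ A ×ˢ B from ⟨ha, hb⟩)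
      simpa using this
    have h2 : vectorSpan ℝ B ≤ (vectorSpan ℝ (A ×ˢ B)).comap (LinearMap.inr ℝ E F) := by
      rw [vectorSpan_eq_span_vsub_set_right ℝ hb, Submodule.span_le]
      rintro _ ⟨x, hx, rfl⟩
      have := vsub_mem_vectorSpan ℝ (show (a, x) ∈ A ×ˢ B from ⟨ha, hx⟩)
        (show (a, b) ∈ A ×ˢ B from ⟨ha, hb⟩)
      simpa using this
    rintro ⟨u, w⟩ ⟨hu, hw⟩
    have := add_mem (Submodule.mem_comap.1 (h1 hu)) (Submodule.mem_comap.1 (h2 hw))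
    simpa using this

theorem aux_pdim_prod {A : Set E} {B : Set F} (hA : A.Nonempty) (hB : B.Nonempty) :
    pdim (A ×ˢ B) = pdim A + pdim B := by
  unfold pdim
  rw [aux_vectorSpan_prod hA hB, ← Module.finrank_prod]
  exact LinearEquiv.finrank_eq
    { toFun := fun x => (⟨x.1.1, x.2.1⟩, ⟨x.1.2, x.2.2⟩)
      invFun := fun y => ⟨(y.1.1, y.2.1), ⟨y.1.2, y.2.2⟩⟩
      map_add' := fun _ _ => rfl
      map_smul' := fun _ _ => rfl
      left_inv := fun _ => rfl
      right_inv := fun _ => rfl }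

theorem aux_pdim_mono {A B : Set E} (h : A ⊆ B) : pdim A ≤ pdim B :=
  Submodule.finrank_mono (vectorSpan_mono ℝ h)

theorem aux_pdim_empty : pdim (∅ : Set E) = 0 := by
  simp [pdim]

theorem aux_sub_self {Q : Set E} (h : IsPolytope Q) : IsSubdivision {Q} Q where
  poly := by simpa using h
  dim_eq := by simp
  vertices_subset := by simp
  cover := by simp
  inter_face := by
    intro P hP P' hP' hne
    simp only [Finset.mem_singleton] at hP hP'
    exact absurd (hP.trans hP'.symm) hne

theorem aux_sub_empty {T : Finset (Set E)} (h : ∀ P ∈ T, P = ∅) : IsSubdivision T (∅ : Set E) where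
  poly := fun P hP => ⟨∅, by simp [h P hP]⟩
  dim_eq := fun P hP => by rw [h P hP]
  vertices_subset := fun P hP => by rw [h P hP]
  cover := by
    rw [Set.sUnion_eq_empty]; exact h
  inter_face := by
    intro P hP P' hP' hne
    exact absurd ((h P hP).trans (h P' hP').symm) hne

theorem aux_main {Q₁ : Set E} {Q₂ : Set F}
    (hQ₁ : IsPolytope Q₁) (hQ₂ : IsPolytope Q₂) (hne₁ : Q₁.Nonempty) (hne₂ : Q₂.Nonempty)
    (S : Finset (Set (E × F)))
    (hS : IsSubdivision S (Q₁ ×ˢ Q₂))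
    (hedges : ∀ F, IsEdgeOfSubdivision S F → IsFaceOf (Q₁ ×ˢ Q₂) F) :
    ∃ (S₁ : Finset (Set E)) (S₂ : Finset (Set F)),
      IsSubdivision S₁ Q₁ ∧ IsSubdivision S₂ Q₂ ∧
      (↑S : Set (Set (E × F))) =
        {P | ∃ P₁ ∈ S₁, ∃ P₂ ∈ S₂, P = P₁ ×ˢ P₂} := by
  classical
  have hsub : ∀ P ∈ S, P ⊆ Q₁ ×ˢ Q₂ := fun P hP => by
    rw [← hS.cover]; exact Set.subset_sUnion_of_mem hP
  set A : Set (E × F) → Set E := fun P => Prod.fst '' P with hA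
  set B : Set (E × F) → Set F := fun P => Prod.snd '' P with hB
  have hprod : ∀ P ∈ S, P = A P ×ˢ B P := fun P hP =>
    aux_cell_prod (hS.poly P hP) (hsub P hP) fun G hG hd => hedges G ⟨⟨P, hP, hG⟩, hd⟩
  have hApoly : ∀ P ∈ S, IsPolytope (A P) := fun P hP =>
    aux_image (hS.poly P hP) (LinearMap.fst ℝ E F)
  have hBpoly : ∀ P ∈ S, IsPolytope (B P) := fun P hP =>
    aux_image (hS.poly P hP) (LinearMap.snd ℝ E F)
  have hAQ : ∀ P ∈ S, A P ⊆ Q₁ := by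
    rintro P hP _ ⟨p, hp, rfl⟩
    exact (hsub P hP hp).1
  have hBQ : ∀ P ∈ S, B P ⊆ Q₂ := by
    rintro P hP _ ⟨p, hp, rfl⟩
    exact (hsub P hP hp).2
  have hAne : ∀ P, P.Nonempty → (A P).Nonempty := fun P h => h.image _
  have hBne : ∀ P, P.Nonempty → (B P).Nonempty := fun P h => h.image _
  have hdQ := aux_pdim_prod hne₁ hne₂
  have hdims : ∀ P ∈ S, pdim (A P) = pdim Q₁ ∧ pdim (B P) = pdim Q₂ := by
    intro P hP
    have h1 := aux_pdim_mono (hAQ P hP)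
    have h2 := aux_pdim_mono (hBQ P hP)
    have h3 := hS.dim_eq P hP
    rcases P.eq_empty_or_nonempty with h | h
    · rw [h, aux_pdim_empty] at h3
      omega
    · rw [hprod P hP, aux_pdim_prod (hAne P h) (hBne P h)] at h3
      omega
  have hcov : ∀ x ∈ Q₁, ∀ y ∈ Q₂, ∃ P ∈ S, x ∈ A P ∧ y ∈ B P := by
    intro x hx y hy
    have : (x, y) ∈ ⋃₀ (S : Set (Set (E × F))) := by rw [hS.cover]; exact ⟨hx, hy⟩
    obtain ⟨P, hP, hm⟩ := this
    exact ⟨P, hP, ⟨_, hm, rfl⟩, ⟨_, hm, rfl⟩⟩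
  have hinter : ∀ P ∈ S, ∀ R ∈ S, P ≠ R → (A P ∩ A R).Nonempty → (B P ∩ B R).Nonempty →
      (IsFaceOf (A P) (A P ∩ A R) ∧ IsFaceOf (B P) (B P ∩ B R)) ∧
      (IsFaceOf (A R) (A P ∩ A R) ∧ IsFaceOf (B R) (B P ∩ B R)) ∧
      (A P ∩ A R) ×ˢ (B P ∩ B R) ≠ A P ×ˢ B P ∧ (A P ∩ A R) ×ˢ (B P ∩ B R) ≠ A R ×ˢ B R := by
    intro P hP R hR hne h1 h2
    have e : P ∩ R = (A P ∩ A R) ×ˢ (B P ∩ B R) := by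
      conv_lhs => rw [hprod P hP, hprod R hR]
      exact Set.prod_inter_prod
    obtain ⟨k1, k2, k3, k4⟩ := hS.inter_face P hP R hR hne (by rw [e]; exact h1.prod h2)
    rw [e] at k1 k2 k3 k4
    refine ⟨?_, ?_, ?_, ?_⟩
    · rw [hprod P hP] at k1
      exact aux_face_of_prod h1 h2 (h1.mono Set.inter_subset_left)
        (h2.mono Set.inter_subset_left) (by convert k1 using 1; rw [← hprod P hP])
    · rw [hprod R hR] at k3
      exact aux_face_of_prod h1 h2 (h1.mono Set.inter_subset_right)
        (h2.mono Set.inter_subset_right) (by convert k3 using 1; rw [← hprod R hR])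
    · rw [← hprod P hP]; exact k2
    · rw [← hprod R hR]; exact k4
  -- product closure
  have hclosed : ∀ P ∈ S, ∀ R ∈ S, A P ×ˢ B R ∈ S := by
    intro P hP R hR
    rcases P.eq_empty_or_nonempty with h | hPne
    · have : A P ×ˢ B R = P := by rw [h]; simp [hA]
      rwa [this]
    rcases R.eq_empty_or_nonempty with h | hRne
    · have : A P ×ˢ B R = R := by rw [h]; simp [hB]
      rwa [this]
    obtain ⟨x, hx, hxc⟩ := aux_center (hApoly P hP) (hAne P hPne)
    obtain ⟨y, hy, hyc⟩ := aux_center (hBpoly R hR) (hBne R hRne)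
    obtain ⟨T, hT, hxT, hyT⟩ := hcov x (hAQ P hP hx) y (hBQ R hR hy)
    have e1 : A T = A P := aux_key S A B (aux_convex hQ₂).isPreconnected
      (fun i hi => aux_compact (hBpoly i hi)) hBQ hAQ hcov
      (fun i hi j hj hij h1 h2 =>
        have h := hinter i hi j hj (fun h => hij (by rw [h])) h1 h2
        ⟨h.1.1, h.2.1.1⟩)
      (fun i hi j hj => (hdims i hi).1.trans (hdims j hj).1.symm)
      hP hT hx hxc hxT (hBne P hPne) ⟨y, hyT⟩
    have e2 : B T = B R := aux_key S B A (aux_convex hQ₁).isPreconnected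
      (fun i hi => aux_compact (hApoly i hi)) hAQ hBQ
      (fun y hy x hx => by
        obtain ⟨P, hP, h1, h2⟩ := hcov x hx y hy
        exact ⟨P, hP, h2, h1⟩)
      (fun i hi j hj hij h1 h2 =>
        have h := hinter i hi j hj (fun h => hij (by rw [h])) h2 h1
        ⟨h.1.2, h.2.1.2⟩)
      (fun i hi j hj => (hdims i hi).2.trans (hdims j hj).2.symm)
      hR hT hy hyc hyT (hAne R hRne) ⟨x, hxT⟩
    rw [← e1, ← e2, ← hprod T hT]
    exact hT
  obtain ⟨x₀, hx₀⟩ := hne₁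
  obtain ⟨y₀, hy₀⟩ := hne₂
  obtain ⟨P₀, hP₀, hxP₀, hyP₀⟩ := hcov x₀ hx₀ y₀ hy₀
  have hAB : ∀ C : Set E, ∀ D : Set F, C.Nonempty → D.Nonempty → A (C ×ˢ D) = C ∧ B (C ×ˢ D) = D :=
    fun C D hC hD => ⟨Set.fst_image_prod C hD, Set.snd_image_prod hC D⟩
  have hext : ∀ P ∈ S, (A P).extremePoints ℝ ×ˢ (B P).extremePoints ℝ ⊆
      Q₁.extremePoints ℝ ×ˢ Q₂.extremePoints ℝ := by
    intro P hP
    rw [← extremePoints_prod, ← extremePoints_prod, ← hprod P hP]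
    exact hS.vertices_subset P hP
  refine ⟨S.image A, S.image B, ?_, ?_, ?_⟩
  · constructor
    · simpa [Finset.forall_mem_image] using hApoly
    · simpa [Finset.forall_mem_image] using fun P hP => (hdims P hP).1
    · simp only [Finset.forall_mem_image]
      intro P hP x hx
      obtain ⟨y, hy⟩ := (aux_compact (hBpoly P hP)).extremePoints_nonempty
        (by obtain ⟨p, hp, -⟩ := hx.1; exact ⟨_, p, hp, rfl⟩)
      exact (hext P hP (show (x, y) ∈ _ from ⟨hx, hy⟩)).1
    · ext x
      simp only [Set.mem_sUnion, Finset.mem_coe, Finset.mem_image]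
      constructor
      · rintro ⟨_, ⟨P, hP, rfl⟩, hx⟩
        exact hAQ P hP hx
      · intro hx
        obtain ⟨P, hP, hxP, -⟩ := hcov x hx y₀ hy₀
        exact ⟨_, ⟨P, hP, rfl⟩, hxP⟩
    · simp only [Finset.forall_mem_image]
      intro P hP R hR hne hint
      have hD : (B P₀).Nonempty := ⟨_, hyP₀⟩
      obtain ⟨a1, b1⟩ := hAB (A P) (B P₀) (hint.mono Set.inter_subset_left) hD
      obtain ⟨a2, b2⟩ := hAB (A R) (B P₀) (hint.mono Set.inter_subset_right) hD
      have := hinter _ (hclosed P hP P₀ hP₀) _ (hclosed R hR P₀ hP₀)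
        (fun h => hne (by rw [← a1, ← a2, h])) (by rw [a1, a2]; exact hint)
        (by rw [b1, b2, Set.inter_self]; exact hD)
      rw [a1, a2, b1, b2, Set.inter_self] at this
      exact ⟨this.1.1, fun h => this.2.2.1 (by rw [h]), this.2.1.1, fun h => this.2.2.2 (by rw [h])⟩
  · constructor
    · simpa [Finset.forall_mem_image] using hBpoly
    · simpa [Finset.forall_mem_image] using fun P hP => (hdims P hP).2
    · simp only [Finset.forall_mem_image]
      intro P hP y hy
      obtain ⟨x, hx⟩ := (aux_compact (hApoly P hP)).extremePoints_nonempty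
        (by obtain ⟨p, hp, -⟩ := hy.1; exact ⟨_, p, hp, rfl⟩)
      exact (hext P hP (show (x, y) ∈ _ from ⟨hx, hy⟩)).2
    · ext y
      simp only [Set.mem_sUnion, Finset.mem_coe, Finset.mem_image]
      constructor
      · rintro ⟨_, ⟨P, hP, rfl⟩, hx⟩
        exact hBQ P hP hx
      · intro hy
        obtain ⟨P, hP, -, hyP⟩ := hcov x₀ hx₀ y hy
        exact ⟨_, ⟨P, hP, rfl⟩, hyP⟩
    · simp only [Finset.forall_mem_image]
      intro P hP R hR hne hint
      have hD : (A P₀).Nonempty := ⟨_, hxP₀⟩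
      obtain ⟨a1, b1⟩ := hAB (A P₀) (B P) hD (hint.mono Set.inter_subset_left)
      obtain ⟨a2, b2⟩ := hAB (A P₀) (B R) hD (hint.mono Set.inter_subset_right)
      have := hinter _ (hclosed P₀ hP₀ P hP) _ (hclosed P₀ hP₀ R hR)
        (fun h => hne (by rw [← b1, ← b2, h])) (by rw [a1, a2, Set.inter_self]; exact hD)
        (by rw [b1, b2]; exact hint)
      rw [a1, a2, b1, b2, Set.inter_self] at this
      exact ⟨this.1.2, fun h => this.2.2.1 (by rw [h]), this.2.1.2, fun h => this.2.2.2 (by rw [h])⟩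
  · ext P
    simp only [Finset.mem_coe, Set.mem_ofPred_eq, Finset.mem_image]
    constructor
    · intro hP
      exact ⟨_, ⟨P, hP, rfl⟩, _, ⟨P, hP, rfl⟩, hprod P hP⟩
    · rintro ⟨_, ⟨P, hP, rfl⟩, _, ⟨R, hR, rfl⟩, rfl⟩
      exact hclosed P hP R hR

theorem aux_full {Q₁ : Set E} {Q₂ : Set F}
    (hQ₁ : IsPolytope Q₁) (hQ₂ : IsPolytope Q₂)
    (S : Finset (Set (E × F)))
    (hS : IsSubdivision S (Q₁ ×ˢ Q₂))
    (hedges : ∀ F, IsEdgeOfSubdivision S F → IsFaceOf (Q₁ ×ˢ Q₂) F) :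
    ∃ (S₁ : Finset (Set E)) (S₂ : Finset (Set F)),
      IsSubdivision S₁ Q₁ ∧ IsSubdivision S₂ Q₂ ∧
      (↑S : Set (Set (E × F))) =
        {P | ∃ P₁ ∈ S₁, ∃ P₂ ∈ S₂, P = P₁ ×ˢ P₂} := by
  classical
  have hsub : ∀ P ∈ S, P ⊆ Q₁ ×ˢ Q₂ := fun P hP => by
    rw [← hS.cover]; exact Set.subset_sUnion_of_mem hP
  rcases Q₁.eq_empty_or_nonempty with rfl | h1
  · have hemp : ∀ P ∈ S, P = ∅ := fun P hP => by simpa using hsub P hP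
    refine ⟨S.image (fun P => Prod.fst '' P), {Q₂}, aux_sub_empty ?_, aux_sub_self hQ₂, ?_⟩
    · simp only [Finset.forall_mem_image]
      intro P hP; simp [hemp P hP]
    · ext P
      simp only [Finset.mem_coe, Set.mem_ofPred_eq, Finset.mem_image, Finset.mem_singleton]
      constructor
      · intro hP
        exact ⟨_, ⟨P, hP, rfl⟩, _, rfl, by simp [hemp P hP]⟩
      · rintro ⟨_, ⟨R, hR, rfl⟩, _, rfl, rfl⟩
        have := hemp R hR
        subst this
        simpa using hR
  rcases Q₂.eq_empty_or_nonempty with rfl | h2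
  · have hemp : ∀ P ∈ S, P = ∅ := fun P hP => by simpa using hsub P hP
    refine ⟨{Q₁}, S.image (fun P => Prod.snd '' P), aux_sub_self hQ₁, aux_sub_empty ?_, ?_⟩
    · simp only [Finset.forall_mem_image]
      intro P hP; simp [hemp P hP]
    · ext P
      simp only [Finset.mem_coe, Set.mem_ofPred_eq, Finset.mem_image, Finset.mem_singleton]
      constructor
      · intro hP
        exact ⟨_, rfl, _, ⟨P, hP, rfl⟩, by simp [hemp P hP]⟩
      · rintro ⟨_, rfl, _, ⟨R, hR, rfl⟩, rfl⟩
        have := hemp R hR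
        subst this
        simpa using hR
  exact aux_main hQ₁ hQ₂ h1 h2 S hS hedges

end Aux

/-- Let `Q₁ ⊆ ℝ^{k₁}` and `Q₂ ⊆ ℝ^{k₂}` be polytopes and let `S` be a
subdivision of the product polytope `Q₁ × Q₂` all of whose edges are edges of `Q₁ × Q₂`.
Then `S` is a product subdivision: `S = S₁ × S₂` for subdivisions `S₁` of `Q₁` and `S₂`
of `Q₂`. -/
theorem subdivision_of_product {k₁ k₂ : ℕ}
    (Q₁ : Set (Fin k₁ → ℝ)) (Q₂ : Set (Fin k₂ → ℝ))
    (hQ₁ : IsPolytope Q₁) (hQ₂ : IsPolytope Q₂)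
    (S : Finset (Set ((Fin k₁ → ℝ) × (Fin k₂ → ℝ))))
    (hS : IsSubdivision S (Q₁ ×ˢ Q₂))
    (hedges : ∀ F, IsEdgeOfSubdivision S F → IsFaceOf (Q₁ ×ˢ Q₂) F) :
    ∃ (S₁ : Finset (Set (Fin k₁ → ℝ))) (S₂ : Finset (Set (Fin k₂ → ℝ))),
      IsSubdivision S₁ Q₁ ∧ IsSubdivision S₂ Q₂ ∧
      (↑S : Set (Set ((Fin k₁ → ℝ) × (Fin k₂ → ℝ)))) =
        {P | ∃ P₁ ∈ S₁, ∃ P₂ ∈ S₂, P = P₁ ×ˢ P₂} := by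
  exact aux_full hQ₁ hQ₂ S hS hedges
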